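/- Let G be a commutative group. Suppose N ≤ G is a submonoid for which there exist b ∈ N and ℓ ∈ ℕ such that Z_{N,ℓ}(b) is infinite. Then there exists a submonoid W of G containing N with Subgroup.closure (W : Set G) = ⊤ (so W is an undermonoid of G) such that Z_W(b) is infinite; in particular W is not an FFM. -/

import Mathlib

/-- The set of factorizations of `b` in the submonoid `S` of the group `G`. -/
def ZSet {G : Type*} [CommGroup G] (S : Submonoid G) (b : S) :
    Set (Multiset (Associates S)) :=
  {z | (∀ a ∈ z, Irreducible a) ∧ z.prod = Associates.mk b}

/-- The set of length-`ℓ` factorizations of `b` in `S`. -/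
def ZSetLen {G : Type*} [CommGroup G] (S : Submonoid G) (b : S) (ℓ : ℕ) :
    Set (Multiset (Associates S)) :=
  {z ∈ ZSet S b | Multiset.card z = ℓ}

/-- `S` is an FFM. -/
def IsFFM {G : Type*} [CommGroup G] (S : Submonoid G) : Prop :=
  ∀ b : S, (ZSet S b).Nonempty ∧ (ZSet S b).Finite

theorem irreducible_mk_iff {M : Type*} [CommMonoid M] (x : M) :
    Irreducible (Associates.mk x) ↔ Irreducible x := by
  constructor
  · intro h
    refine ⟨fun hx => h.not_isUnit (Associates.isUnit_mk.2 hx), fun u v huv => ?_⟩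
    have := h.isUnit_or_isUnit (a := Associates.mk u) (b := Associates.mk v)
      (by rw [huv, Associates.mk_mul_mk])
    simpa only [Associates.isUnit_mk] using this
  · intro h
    refine ⟨fun hx => h.not_isUnit (Associates.isUnit_mk.1 hx), fun u v huv => ?_⟩
    obtain ⟨u, rfl⟩ := Associates.mk_surjective u
    obtain ⟨v, rfl⟩ := Associates.mk_surjective v
    rw [Associates.mk_mul_mk, Associates.mk_eq_mk_iff_associated] at huv
    simpa only [Associates.isUnit_mk] using (huv.irreducible h).isUnit_or_isUnit rfl

theorem exists_cone {G : Type*} [CommGroup G] (N : Submonoid G) (b : G) (hb : b ∈ N)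
    (hb' : b⁻¹ ∉ N) : ∃ P : Submonoid G, N ≤ P ∧ b⁻¹ ∉ P ∧ ∀ x, x ∈ P ∨ x⁻¹ ∈ P := by
  obtain ⟨P, hNP, hP⟩ := zorn_le_nonempty₀ {P : Submonoid G | b⁻¹ ∉ P} (by
    intro c hc hchain y hy
    refine ⟨sSup c, ?_, fun z hz => le_sSup hz⟩
    intro h
    rw [Submonoid.mem_sSup_of_directedOn ⟨y, hy⟩ hchain.directedOn] at h
    obtain ⟨s, hs, h⟩ := h
    exact hc hs h) N hb'
  have hbP : b⁻¹ ∉ P := hP.prop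
  have key : ∀ x, x ∉ P → ∃ p ∈ P, ∃ m : ℕ, p * x ^ m = b⁻¹ := by
    intro x hx
    by_contra hcon
    have hle : P ⊔ Submonoid.powers x ≤ P := by
      refine hP.le_of_ge ?_ le_sup_left
      intro h
      obtain ⟨p, hp, q, ⟨m, rfl⟩, h⟩ := Submonoid.mem_sup.1 h
      exact hcon ⟨p, hp, m, h⟩
    exact hx (hle ((le_sup_right : _ ≤ P ⊔ Submonoid.powers x) (Submonoid.mem_powers x)))
  refine ⟨P, hNP, hbP, fun x => ?_⟩
  by_contra hcon
  push Not at hcon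
  obtain ⟨p, hp, m, h1⟩ := key x hcon.1
  obtain ⟨q, hq, n, h2⟩ := key x⁻¹ hcon.2
  rcases m with _ | m
  · apply hbP
    rw [← h1]; simpa using hp
  have h3 : p ^ n * q ^ (m + 1) * b ^ (n + m) = b⁻¹ := by
    have hp' : p = b⁻¹ * (x ^ (m + 1))⁻¹ := by rw [← h1]; group
    have hq' : q = b⁻¹ * x ^ n := by rw [← h2]; simp
    rw [hp', hq', mul_pow, mul_pow, inv_pow, inv_pow, inv_pow, ← pow_mul, ← pow_mul,
      mul_comm (m + 1) n]
    have : b ^ (n + m) = b⁻¹ * (b ^ n * b ^ (m + 1)) := by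
      rw [pow_add, pow_succ, ← mul_assoc (b ^ n), mul_comm _ b, inv_mul_cancel_left]
    rw [this]
    generalize b ^ n = s
    generalize b ^ (m + 1) = t
    generalize x ^ (n * (m + 1)) = w
    rw [show s⁻¹ * w⁻¹ * (t⁻¹ * w) * (b⁻¹ * (s * t)) =
      (s⁻¹ * s) * (w⁻¹ * w) * (t⁻¹ * t) * b⁻¹ by ac_rfl]
    simp
  apply hbP
  rw [← h3]
  exact P.mul_mem (P.mul_mem (P.pow_mem hp _) (P.pow_mem hq _)) (P.pow_mem (hNP hb) _)

theorem zset_infinite_of_div {G : Type*} [CommGroup G] (N W : Submonoid G) (hNW : N ≤ W)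
    (b : G) (hb : b ∈ N)
    (hdiv : ∀ x ∈ W, ∀ y ∈ W, x * y ∈ N → b * (x * y)⁻¹ ∈ N → x ∈ N)
    (hinf : (ZSet N ⟨b, hb⟩).Infinite) : (ZSet W ⟨b, hNW hb⟩).Infinite := by
  have hunit : ∀ u v : W, u * v = 1 → (u : G) ∈ N := by
    intro u v h
    have h' : (u : G) * v = 1 := by simpa using congrArg Subtype.val h
    exact hdiv u u.2 v v.2 (by rw [h']; exact N.one_mem) (by rw [h']; simpa using hb)
  let f : N →* W := Submonoid.inclusion hNW
  have hf : ∀ x : N, ((f x : W) : G) = x := fun x => rfl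
  have hassoc : ∀ x y : N, Associated (f x) (f y) → Associated x y := by
    rintro x y ⟨u, hu⟩
    have h1 := hunit u.1 u.2 u.3
    have h2 := hunit u.2 u.1 u.4
    refine ⟨⟨⟨_, h1⟩, ⟨_, h2⟩, ?_, ?_⟩, ?_⟩
    · exact Subtype.ext (congrArg (Subtype.val : W → G) u.3 :)
    · exact Subtype.ext (congrArg (Subtype.val : W → G) u.4 :)
    · exact Subtype.ext (congrArg (Subtype.val : W → G) hu :)
  let φ : Associates N →* Associates W :=
    { toFun := Quotient.map f (fun x y h => h.map f)
      map_one' := by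
        change Associates.mk (f 1) = 1
        simp
      map_mul' := by
        intro x y
        induction x using Quotient.inductionOn
        induction y using Quotient.inductionOn
        rename_i x y
        change Associates.mk (f (x * y)) = Associates.mk (f x) * Associates.mk (f y)
        rw [map_mul, Associates.mk_mul_mk] }
  have hφ : ∀ x, φ (Associates.mk x) = Associates.mk (f x) := fun x => rfl
  have hφi : Function.Injective φ := by
    intro x y h
    obtain ⟨x, rfl⟩ := Associates.mk_surjective x
    obtain ⟨y, rfl⟩ := Associates.mk_surjective y
    rw [hφ, hφ, Associates.mk_eq_mk_iff_associated] at h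
    exact Associates.mk_eq_mk_iff_associated.2 (hassoc x y h)
  refine (hinf.image (Multiset.map_injective hφi).injOn).mono ?_
  rintro _ ⟨z, ⟨hz, hzb⟩, rfl⟩
  refine ⟨?_, ?_⟩
  · intro a' ha'
    obtain ⟨a, ha, rfl⟩ := Multiset.mem_map.1 ha'
    have hirr := hz a ha
    have hd := Multiset.dvd_prod ha
    rw [hzb] at hd
    obtain ⟨x, rfl⟩ := Associates.mk_surjective a
    rw [Associates.mk_dvd_mk] at hd
    rw [irreducible_mk_iff] at hirr
    rw [hφ, irreducible_mk_iff]
    obtain ⟨c, hc⟩ := hd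
    have hc' : b * (x : G)⁻¹ = c := by
      have : b = (x : G) * c := congrArg Subtype.val hc
      rw [this]; simp
    refine ⟨?_, ?_⟩
    · rintro ⟨u, hu⟩
      apply hirr.not_isUnit
      have h2 := hunit u.2 u.1 u.4
      refine IsUnit.of_mul_eq_one ⟨_, h2⟩ (Subtype.ext ?_)
      have := congrArg Subtype.val u.3
      rw [hu] at this
      exact this
    · intro u v huv
      have huv' : (x : G) = u * v := congrArg Subtype.val huv
      have hu : (u : G) ∈ N := hdiv u u.2 v v.2 (by rw [← huv']; exact x.2)
        (by rw [← huv', hc']; exact c.2)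
      have hv : (v : G) ∈ N := hdiv v v.2 u u.2 (by rw [mul_comm, ← huv']; exact x.2)
        (by rw [mul_comm (v : G), ← huv', hc']; exact c.2)
      rcases hirr.isUnit_or_isUnit (a := ⟨u, hu⟩) (b := ⟨v, hv⟩) (Subtype.ext huv') with h | h
      · exact Or.inl (h.map f)
      · exact Or.inr (h.map f)
  · rw [Multiset.prod_hom, hzb]
    rfl

/-- Bad submonoids produce bad undermonoids, group case: if a submonoid `N` of the
commutative group `G` has an element `b` with infinitely many length-`ℓ`
factorizations, then there is a submonoid `W ⊇ N` generating `G` as a group (an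
undermonoid) in which `b` has infinitely many factorizations; in particular `W` is
not an FFM. -/
theorem group_bad_undermonoid {G : Type*} [CommGroup G] (N : Submonoid G)
    (b : G) (hb : b ∈ N) (ℓ : ℕ) (hinf : (ZSetLen N ⟨b, hb⟩ ℓ).Infinite) :
    ∃ W : Submonoid G, N ≤ W ∧ Subgroup.closure (W : Set G) = ⊤ ∧
      ∃ hbW : b ∈ W, (ZSet W ⟨b, hbW⟩).Infinite ∧ ¬ IsFFM W := by
  have hinf' : (ZSet N ⟨b, hb⟩).Infinite := hinf.mono (fun z hz => hz.1)
  have hb' : b⁻¹ ∉ N := by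
    intro h
    apply hinf'
    refine (Set.finite_singleton (0 : Multiset (Associates N))).subset ?_
    rintro z ⟨hz, hzb⟩
    have hu : IsUnit (⟨b, hb⟩ : N) :=
      IsUnit.of_mul_eq_one ⟨b⁻¹, h⟩ (Subtype.ext (mul_inv_cancel b))
    rw [Associates.mk_eq_one.2 hu] at hzb
    refine Multiset.eq_zero_of_forall_notMem fun a ha => ?_
    apply (hz a ha).not_isUnit
    refine isUnit_of_dvd_one ?_
    rw [← hzb]
    exact Multiset.dvd_prod ha
  obtain ⟨P, hNP, hbP, htot⟩ := exists_cone N b hb hb'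
  have hbig : ∀ y : G, y * b⁻¹ ∈ P → y ∈ P := by
    intro y hy
    simpa using P.mul_mem hy (hNP hb)
  have hmul : ∀ x y : G, x ∈ P → (y * b⁻¹ ∈ P ∧ b * y⁻¹ ∉ P) →
      (x * y * b⁻¹ ∈ P ∧ b * (x * y)⁻¹ ∉ P) := by
    rintro x y hx ⟨h1, h2⟩
    refine ⟨by rw [mul_assoc]; exact P.mul_mem hx h1, fun h => h2 ?_⟩
    have := P.mul_mem h hx
    rwa [show b * (x * y)⁻¹ * x = b * y⁻¹ by
      rw [mul_inv, show b * (x⁻¹ * y⁻¹) * x = b * y⁻¹ * (x⁻¹ * x) by ac_rfl]; simp] at this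
  let W : Submonoid G :=
    { carrier := {g | g ∈ N ∨ (g * b⁻¹ ∈ P ∧ b * g⁻¹ ∉ P)}
      one_mem' := Or.inl N.one_mem
      mul_mem' := by
        rintro x y (hx | hx) (hy | hy)
        · exact Or.inl (N.mul_mem hx hy)
        · exact Or.inr (hmul x y (hNP hx) hy)
        · rw [mul_comm]
          exact Or.inr (hmul y x (hNP hy) hx)
        · exact Or.inr (hmul x y (hbig x hx.1) hy) }
  have hNW : N ≤ W := fun x hx => Or.inl hx
  have hWP : W ≤ P := by
    rintro x (hx | hx)
    · exact hNP hx
    · exact hbig x hx.1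
  have hI : (ZSet W ⟨b, hNW hb⟩).Infinite := by
    refine zset_infinite_of_div N W hNW b hb ?_ hinf'
    rintro x (hx | hx) y hy _ h
    · exact hx
    · exfalso
      apply hx.2
      have := P.mul_mem (hNP h) (hWP hy)
      rwa [show b * (x * y)⁻¹ * y = b * x⁻¹ by rw [mul_inv]; simp [mul_assoc]] at this
  refine ⟨W, hNW, ?_, hNW hb, hI, fun h => hI (h _).2⟩
  have hb2 : b * b ∈ W := Or.inl (N.mul_mem hb hb)
  have hpos : ∀ x ∈ P, x ∈ Subgroup.closure (W : Set G) := by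
    intro x hx
    have h1 : x * (b * b) ∈ W := by
      refine Or.inr (hmul x (b * b) hx ⟨?_, ?_⟩)
      · simpa using hNP hb
      · simpa using hbP
    have := Subgroup.mul_mem _ (Subgroup.subset_closure h1)
      (Subgroup.inv_mem _ (Subgroup.subset_closure hb2))
    rwa [mul_inv_cancel_right] at this
  rw [eq_top_iff]
  intro x _
  rcases htot x with h | h
  · exact hpos x h
  · simpa using Subgroup.inv_mem _ (hpos _ h)
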